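/- Let K be a field and n ≥ 0. Then the universal enveloping algebra U(K^n) is finite dimensional over K, with dim_K U(K^n) = 2·2^n + (n² + n − 2)/2. -/

import Mathlib

/-!
Universal enveloping algebra of the abelian alternative algebra `K^n`.

`T = Tens_K(K^n ⊕ K^n)`; `l_a` (resp. `r_a`) is the image of `(a,0)` (resp. `(0,a)`).
`U(K^n)` is the quotient of `T` by the two-sided ideal generated by
`l_a·l_a`, `r_a·r_a`, `l_b·l_a + r_a·r_b`, `r_b·l_a − l_a·r_b − r_a·r_b`.
-/

noncomputable section

/-- `l_a ∈ Tens_K(K^n ⊕ K^n)`. -/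
def lT (K : Type) [CommRing K] (n : ℕ) (a : Fin n → K) :
    TensorAlgebra K ((Fin n → K) × (Fin n → K)) :=
  TensorAlgebra.ι K (a, 0)

/-- `r_a ∈ Tens_K(K^n ⊕ K^n)`. -/
def rT (K : Type) [CommRing K] (n : ℕ) (a : Fin n → K) :
    TensorAlgebra K ((Fin n → K) × (Fin n → K)) :=
  TensorAlgebra.ι K (0, a)

/-- The relations defining `U(K^n)`: quotienting by this relation is the same as
quotienting by the two-sided ideal generated by the listed elements. -/
inductive URel (K : Type) [CommRing K] (n : ℕ) :
    TensorAlgebra K ((Fin n → K) × (Fin n → K)) →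
    TensorAlgebra K ((Fin n → K) × (Fin n → K)) → Prop
  | ll (a : Fin n → K) : URel K n (lT K n a * lT K n a) 0
  | rr (a : Fin n → K) : URel K n (rT K n a * rT K n a) 0
  | llrr (a b : Fin n → K) : URel K n (lT K n b * lT K n a + rT K n a * rT K n b) 0
  | rl (a b : Fin n → K) :
      URel K n (rT K n b * lT K n a - lT K n a * rT K n b - rT K n a * rT K n b) 0

/-- The universal enveloping algebra `U(K^n)`. -/
def Ualg (K : Type) [CommRing K] (n : ℕ) : Type := RingQuot (URel K n)

instance (K : Type) [CommRing K] (n : ℕ) : Ring (Ualg K n) :=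
  inferInstanceAs (Ring (RingQuot (URel K n)))

instance (K : Type) [CommRing K] (n : ℕ) : Algebra K (Ualg K n) :=
  inferInstanceAs (Algebra K (RingQuot (URel K n)))

/-- Image of `l_a` in `U(K^n)`. -/
def lU (K : Type) [CommRing K] (n : ℕ) (a : Fin n → K) : Ualg K n :=
  RingQuot.mkAlgHom K (URel K n) (lT K n a)

/-- Image of `r_a` in `U(K^n)`. -/
def rU (K : Type) [CommRing K] (n : ℕ) (a : Fin n → K) : Ualg K n :=
  RingQuot.mkAlgHom K (URel K n) (rT K n a)

/-- The weight-one part `V ⊆ U(K^n)`: the span of all `l_a` and `r_a`. -/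
def V (K : Type) [CommRing K] (n : ℕ) : Submodule K (Ualg K n) :=
  Submodule.span K (Set.range (lU K n) ∪ Set.range (rU K n))

/-!
Let `Λ` be the exterior algebra of `M = K^n`. The involutions `P = !![0, 1; 1, 0]` and
`Q = !![1, -1; 0, -1]` satisfy `P * Q + Q * P = -1`, so `l_a ↦ P ⊗ a`, `r_a ↦ Q ⊗ a` makes
`Λ × Λ` a `U(M)`-module, in which `(1, 0)` generates `Λ × Λ⁺`, with `Λ⁺` the augmentation ideal.
What this module misses are the products `l_a * r_a`: they are killed by all `l_b` and `r_b` from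
the left and span a copy of the symmetric square `S`, detected by a bilinear map `β : M × M → S`
whose values `β (a, a)` form a universal quadratic map. Adding `S` to the module gives an action on
`Λ × Λ⁺ × S` for which `u ↦ u • (1, 0, 0)` is bijective; hence
`dim U(M) = 2 ^ n + (2 ^ n - 1) + n * (n + 1) / 2`.
-/

open ExteriorAlgebra Module

section Exterior

variable {R M : Type*} [CommRing R] [AddCommGroup M] [Module R M]

theorem algebraMapInv_ι_mul (m : M) (x : ExteriorAlgebra R M) :
    algebraMapInv (ι R m * x) = 0 := by
  simp [algebraMapInv]

theorem ιInv_ι_mul (m : M) (x : ExteriorAlgebra R M) :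
    ιInv (ι R m * x) = algebraMapInv x • m := by
  induction x using CliffordAlgebra.left_induction with
  | algebraMap c =>
    rw [algebraMap_leftInverse M c, ← Algebra.commutes, ← Algebra.smul_def, map_smul,
      ι_leftInverse m]
  | add x y hx hy => rw [mul_add, map_add, hx, hy, map_add, add_smul]
  | ι_mul x m' _ =>
    let : Module Rᵐᵒᵖ M := Module.compHom _ ((RingHom.id R).fromOpposite mul_comm)
    have : IsCentralScalar R M := ⟨fun _ _ => rfl⟩
    rw [algebraMapInv_ι_mul, zero_smul]
    simp [ιInv]

theorem ι_mul_ι_mul_self (m : M) (x : ExteriorAlgebra R M) : ι R m * (ι R m * x) = 0 := by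
  rw [← mul_assoc, ι_sq_zero, zero_mul]

theorem ι_mul_ι_mul_swap (a b : M) (x : ExteriorAlgebra R M) :
    ι R a * (ι R b * x) = -(ι R b * (ι R a * x)) := by
  rw [eq_neg_iff_add_eq_zero, ← mul_assoc, ← mul_assoc, ← add_mul, ι_add_mul_swap, zero_mul]

variable (R M) in
/-- The augmentation ideal `Λ⁺` of the exterior algebra (its part of positive degree), as a
submodule. -/
def PosExterior : Submodule R (ExteriorAlgebra R M) :=
  LinearMap.ker (algebraMapInv (R := R) (M := M)).toLinearMap

namespace PosExterior

theorem mem_iff {x : ExteriorAlgebra R M} : x ∈ PosExterior R M ↔ algebraMapInv x = 0 :=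
  Iff.rfl

theorem algebraMapInv_coe (x : PosExterior R M) :
    algebraMapInv (x : ExteriorAlgebra R M) = 0 :=
  x.2

/-- Left multiplication by the generators of the exterior algebra, with values in `Λ⁺`. -/
def ιMul : M →ₗ[R] ExteriorAlgebra R M →ₗ[R] PosExterior R M :=
  LinearMap.mk₂ R (fun m x => ⟨ι R m * x, algebraMapInv_ι_mul m x⟩)
    (fun a b x => Subtype.ext (by simp [add_mul])) (fun c a x => Subtype.ext (by simp))
    (fun a x y => Subtype.ext (by simp [mul_add])) (fun c a x => Subtype.ext (by simp))

@[simp]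
theorem coe_ιMul (m : M) (x : ExteriorAlgebra R M) :
    (ιMul m x : ExteriorAlgebra R M) = ι R m * x :=
  rfl

theorem ιMul_ι_mul_self (a : M) (x : ExteriorAlgebra R M) : ιMul a (ι R a * x) = 0 :=
  Subtype.ext (ι_mul_ι_mul_self a x)

theorem ιMul_ι_mul_swap (a b : M) (x : ExteriorAlgebra R M) :
    ιMul a (ι R b * x) = -ιMul b (ι R a * x) :=
  Subtype.ext (ι_mul_ι_mul_swap a b x)

theorem induction {P : PosExterior R M → Prop} (ι_mul : ∀ m x, P (ιMul m x))
    (add : ∀ x y, P x → P y → P (x + y)) (x : PosExterior R M) : P x := by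
  have sub_mem (y : ExteriorAlgebra R M) :
      y - algebraMap R _ (algebraMapInv y) ∈ PosExterior R M := by
    simp [mem_iff, algebraMap_leftInverse M _]
  suffices ∀ y : ExteriorAlgebra R M, P ⟨_, sub_mem y⟩ by
    simpa only [algebraMapInv_coe, map_zero, sub_zero] using this x
  intro y
  induction y using CliffordAlgebra.left_induction with
  | algebraMap c =>
    convert ι_mul 0 0 using 1
    ext
    simp [algebraMap_leftInverse M c]
  | add y z hy hz =>
    convert add _ _ hy hz using 1
    ext
    simp only [map_add, Submodule.coe_add]
    abel
  | ι_mul y m _ =>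
    convert ι_mul m y using 1
    ext
    simp [algebraMapInv_ι_mul]

end PosExterior

end Exterior

section Birepresentation

variable {R M A : Type*} [CommRing R] [AddCommGroup M] [Module R M] [Ring A] [Algebra R A]

/-- A birepresentation in `A` of `M`, seen as an alternative algebra with zero product: linear maps
`l` and `r` satisfying the relations that define the universal enveloping algebra. -/
structure IsBirepresentation (l r : M →ₗ[R] A) : Prop where
  l_mul_self (a : M) : l a * l a = 0
  r_mul_self (a : M) : r a * r a = 0
  l_mul_l_add (a b : M) : l b * l a + r a * r b = 0
  r_mul_l_sub (a b : M) : r b * l a - l a * r b - r a * r b = 0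

theorem mul_swap_of_mul_self_eq_zero {f : M →ₗ[R] A} (hf : ∀ a, f a * f a = 0) (a b : M) :
    f a * f b = -(f b * f a) := by
  have h := hf (a + b)
  simp only [map_add, add_mul, mul_add, hf, zero_add, add_zero] at h
  exact eq_neg_of_add_eq_zero_right h

namespace IsBirepresentation

variable {l r : M →ₗ[R] A}

theorem l_mul_l (h : IsBirepresentation l r) (a b : M) : l a * l b = r a * r b := by
  rw [mul_swap_of_mul_self_eq_zero h.r_mul_self, eq_neg_iff_add_eq_zero, h.l_mul_l_add]

theorem r_mul_l (h : IsBirepresentation l r) (a b : M) : r b * l a = l a * r b + r a * r b := by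
  rw [← sub_eq_zero, ← sub_sub, h.r_mul_l_sub]

theorem l_mul_l_mul_r_self (h : IsBirepresentation l r) (a m : M) : l a * (l m * r m) = 0 := by
  rw [← mul_assoc, h.l_mul_l, mul_assoc, h.r_mul_self, mul_zero]

theorem r_mul_l_mul_r_self (h : IsBirepresentation l r) (a m : M) : r a * (l m * r m) = 0 := by
  calc r a * (l m * r m) = l m * (r a * r m) + r m * (r a * r m) := by
        rw [← mul_assoc, h.r_mul_l, add_mul, mul_assoc, mul_assoc]
    _ = l m * -(l m * l a) + r m * -(r m * r a) := by
        rw [← h.l_mul_l a m, mul_swap_of_mul_self_eq_zero h.l_mul_self, h.l_mul_l m a]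
    _ = 0 := by
        simp only [mul_neg, ← mul_assoc, h.l_mul_self, h.r_mul_self, zero_mul, neg_zero, add_zero]

end IsBirepresentation

section Model

variable {S : Type*} [AddCommGroup S] [Module R S]

variable (R M S) in
/-- The module `Λ × Λ⁺ × S` underlying the regular representation of the enveloping algebra. -/
abbrev EnvelopingModel : Type _ := ExteriorAlgebra R M × PosExterior R M × S

namespace EnvelopingModel

open PosExterior

variable (β : M →ₗ[R] M →ₗ[R] S)

/-- The action of `l_a` on the model. -/
def left : M →ₗ[R] End R (EnvelopingModel R M S) :=
  LinearMap.mk₂ R (fun a w => (ι R a * w.2.1, ιMul a w.1, β a (ιInv w.1)))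
    (by intros; simp [add_mul]) (by intros; simp)
    (by intros; simp [mul_add]) (by intros; simp)

/-- The action of `r_a` on the model. -/
def right : M →ₗ[R] End R (EnvelopingModel R M S) :=
  LinearMap.mk₂ R
    (fun a w =>
      (ι R a * w.1 - ι R a * w.2.1, -ιMul a w.2.1, β (ιInv (w.2.1 : ExteriorAlgebra R M)) a))
    (by intros; simp [add_mul, add_sub_add_comm, add_comm]) (by intros; simp [smul_sub])
    (by intros; simp [mul_add, add_sub_add_comm, add_comm]) (by intros; simp [smul_sub])

theorem left_apply (a : M) (w : EnvelopingModel R M S) :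
    left β a w = (ι R a * w.2.1, ιMul a w.1, β a (ιInv w.1)) :=
  rfl

theorem right_apply (a : M) (w : EnvelopingModel R M S) :
    right β a w =
      (ι R a * w.1 - ι R a * w.2.1, -ιMul a w.2.1, β (ιInv (w.2.1 : ExteriorAlgebra R M)) a) :=
  rfl

theorem left_left (a b : M) (w : EnvelopingModel R M S) :
    left β a (left β b w) =
      (ι R a * (ι R b * w.1), ιMul a (ι R b * (w.2.1 : ExteriorAlgebra R M)), 0) := by
  simp only [left_apply, coe_ιMul, ιInv_ι_mul, algebraMapInv_coe, zero_smul, map_zero]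

theorem right_right (a b : M) (w : EnvelopingModel R M S) :
    right β a (right β b w) =
      (ι R a * (ι R b * w.1), ιMul a (ι R b * (w.2.1 : ExteriorAlgebra R M)), 0) := by
  simp only [right_apply, Submodule.coe_neg, coe_ιMul, ιInv_ι_mul, algebraMapInv_coe, zero_smul,
    mul_sub, mul_neg, map_neg, neg_neg, neg_zero, map_zero, LinearMap.zero_apply, sub_neg_eq_add,
    sub_add_cancel]

theorem left_right (a b : M) (w : EnvelopingModel R M S) :
    left β a (right β b w) =
      (-(ι R a * (ι R b * w.2.1)),
        ιMul a (ι R b * w.1) - ιMul a (ι R b * (w.2.1 : ExteriorAlgebra R M)),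
        algebraMapInv w.1 • β a b) := by
  simp only [left_apply, right_apply, Submodule.coe_neg, coe_ιMul, ιInv_ι_mul, algebraMapInv_coe,
    zero_smul, mul_neg, map_sub, sub_zero, map_smul]

theorem right_left (a b : M) (w : EnvelopingModel R M S) :
    right β b (left β a w) =
      (ι R b * (ι R a * w.2.1) - ι R b * (ι R a * w.1), -ιMul b (ι R a * w.1),
        algebraMapInv w.1 • β a b) := by
  simp only [left_apply, right_apply, coe_ιMul, ιInv_ι_mul, map_smul, LinearMap.smul_apply]

theorem isBirepresentation :
    IsBirepresentation (A := End R (EnvelopingModel R M S)) (left β) (right β) where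
  l_mul_self a := by
    refine LinearMap.ext fun w => ?_
    rw [End.mul_apply, left_left, ι_mul_ι_mul_self, ιMul_ι_mul_self]
    rfl
  r_mul_self a := by
    refine LinearMap.ext fun w => ?_
    rw [End.mul_apply, right_right, ι_mul_ι_mul_self, ιMul_ι_mul_self]
    rfl
  l_mul_l_add a b := by
    refine LinearMap.ext fun w => ?_
    rw [LinearMap.add_apply, End.mul_apply, End.mul_apply, left_left, right_right,
      ι_mul_ι_mul_swap b a, ιMul_ι_mul_swap b a]
    simp
  r_mul_l_sub a b := by
    refine LinearMap.ext fun w => ?_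
    rw [LinearMap.sub_apply, LinearMap.sub_apply, End.mul_apply, End.mul_apply, End.mul_apply,
      right_left, left_right, right_right, ι_mul_ι_mul_swap b a, ι_mul_ι_mul_swap b a,
      ιMul_ι_mul_swap b a]
    simp

variable {ρ : A →ₐ[R] End R (EnvelopingModel R M S)}

/-- The orbit map `u ↦ u • (1, 0, 0)` of an action `ρ` of `A` on the model. -/
def toModel (ρ : A →ₐ[R] End R (EnvelopingModel R M S)) : A →ₗ[R] EnvelopingModel R M S :=
  (LinearMap.applyₗ (1, 0, 0)).comp ρ.toLinearMap

theorem toModel_apply (u : A) : toModel ρ u = ρ u (1, 0, 0) :=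
  rfl

theorem toModel_mul (u v : A) : toModel ρ (u * v) = ρ u (toModel ρ v) := by
  rw [toModel_apply, map_mul, End.mul_apply, toModel_apply]

end EnvelopingModel

end Model

section FromModel

variable {S : Type*} [AddCommGroup S] [Module R S]
variable {l r : M →ₗ[R] A} {β : M →ₗ[R] M →ₗ[R] S} {σ : S →ₗ[R] A}

namespace IsBirepresentation

open PosExterior EnvelopingModel

theorem map_polar (hσ : ∀ m, σ (β m m) = l m * r m) (a b : M) :
    σ (β a b) + σ (β b a) = l a * r b + l b * r a := by
  have h := hσ (a + b)
  simp only [map_add, LinearMap.add_apply, add_mul, mul_add, hσ] at h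
  rw [← sub_eq_zero] at h ⊢
  rw [← h]
  abel

theorem l_mul_map_eq_zero (h : IsBirepresentation l r) (hσ : ∀ m, σ (β m m) = l m * r m)
    (hβ : Submodule.span R (Set.range fun m => β m m) = ⊤) (a : M) (s : S) : l a * σ s = 0 := by
  have : (LinearMap.mulLeft R (l a)).comp σ = 0 :=
    LinearMap.ext_on_range hβ fun m => by simp [hσ, h.l_mul_l_mul_r_self]
  exact LinearMap.congr_fun this s

theorem r_mul_map_eq_zero (h : IsBirepresentation l r) (hσ : ∀ m, σ (β m m) = l m * r m)
    (hβ : Submodule.span R (Set.range fun m => β m m) = ⊤) (a : M) (s : S) : r a * σ s = 0 := by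
  have : (LinearMap.mulLeft R (r a)).comp σ = 0 :=
    LinearMap.ext_on_range hβ fun m => by simp [hσ, h.r_mul_l_mul_r_self]
  exact LinearMap.congr_fun this s

section Hom

variable (h : IsBirepresentation l r) (hσ : ∀ m, σ (β m m) = l m * r m)

/-- The algebra homomorphism `Λ → A` extending `r`. -/
def exteriorHom : ExteriorAlgebra R M →ₐ[R] A :=
  lift R ⟨r, h.r_mul_self⟩

@[simp]
theorem exteriorHom_ι (a : M) : h.exteriorHom (ι R a) = r a :=
  lift_ι_apply _ _ _ _

theorem l_mul_r_mul_exteriorHom_self (m : M) (x : ExteriorAlgebra R M) :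
    l m * (r m * h.exteriorHom x) = algebraMapInv x • (l m * r m) := by
  induction x using CliffordAlgebra.left_induction with
  | algebraMap c =>
    rw [algebraMap_leftInverse M c, AlgHom.commutes, ← Algebra.commutes, ← Algebra.smul_def,
      mul_smul_comm]
  | add x y hx hy => rw [map_add, mul_add, mul_add, hx, hy, map_add, add_smul]
  | ι_mul x b _ =>
    rw [algebraMapInv_ι_mul, zero_smul, map_mul, exteriorHom_ι, ← mul_assoc (r m), ← h.l_mul_l,
      mul_assoc, ← mul_assoc, h.l_mul_self, zero_mul]

theorem l_mul_r_mul_exteriorHom_add_swap (a b : M) (x : ExteriorAlgebra R M) :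
    l a * (r b * h.exteriorHom x) + l b * (r a * h.exteriorHom x) =
      algebraMapInv x • (l a * r b + l b * r a) := by
  have hab := h.l_mul_r_mul_exteriorHom_self (a + b) x
  simp only [map_add, add_mul, mul_add, h.l_mul_r_mul_exteriorHom_self, smul_add] at hab
  rw [← sub_eq_zero] at hab ⊢
  rw [← hab, smul_add]
  abel

/-- The recursion step `(a, x) ↦ l_a X(x) - σ(β(a, x₁))` of `leftExterior`, where `X` is
`exteriorHom` and `x₁` is the degree one part of `x`. -/
def leftExteriorStep (β : M →ₗ[R] M →ₗ[R] S) (σ : S →ₗ[R] A) :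
    M →ₗ[R] ExteriorAlgebra R M →ₗ[R] A :=
  (LinearMap.mul R A).compl₁₂ l h.exteriorHom.toLinearMap - (β.compr₂ σ).compl₂ ιInv

@[simp]
theorem leftExteriorStep_apply (a : M) (x : ExteriorAlgebra R M) :
    h.leftExteriorStep β σ a x = l a * h.exteriorHom x - σ (β a (ιInv x)) :=
  rfl

/-- The linear map `Λ → A` vanishing on scalars that sends `a ∧ x` to `l_a X(x) - σ(β(a, x₁))`.
The correction by `σ` makes this alternating in degree two. -/
def leftExterior : ExteriorAlgebra R M →ₗ[R] A :=
  CliffordAlgebra.foldr' 0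
    ((h.leftExteriorStep β σ).compl₂ (LinearMap.fst R (ExteriorAlgebra R M) A))
    (fun m x fx => by
      have step_step : h.leftExteriorStep β σ m (ι R m * x) = 0 := by
        simp [h.l_mul_r_mul_exteriorHom_self, ιInv_ι_mul, hσ]
      simpa using step_step)
    0

theorem leftExterior_ι_mul (a : M) (x : ExteriorAlgebra R M) :
    h.leftExterior hσ (ι R a * x) = l a * h.exteriorHom x - σ (β a (ιInv x)) :=
  CliffordAlgebra.foldr'_ι_mul _ _ _ _ _ _

theorem l_mul_leftExterior (hβ : Submodule.span R (Set.range fun m => β m m) = ⊤)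
    (a : M) (q : PosExterior R M) :
    l a * h.leftExterior hσ q = r a * h.exteriorHom q := by
  induction q using PosExterior.induction with
  | ι_mul b x =>
    rw [coe_ιMul, leftExterior_ι_mul, mul_sub, h.l_mul_map_eq_zero hσ hβ, sub_zero, map_mul,
      exteriorHom_ι, ← mul_assoc, h.l_mul_l, mul_assoc]
  | add x y hx hy => simp only [Submodule.coe_add, map_add, mul_add, hx, hy]

theorem r_mul_leftExterior (hβ : Submodule.span R (Set.range fun m => β m m) = ⊤)
    (a : M) (q : PosExterior R M) :
    r a * h.leftExterior hσ q =
      -(r a * h.exteriorHom q) - h.leftExterior hσ (ι R a * q)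
        + σ (β (ιInv (q : ExteriorAlgebra R M)) a) := by
  induction q using PosExterior.induction with
  | ι_mul b x =>
    have hswap := h.l_mul_r_mul_exteriorHom_add_swap a b x
    rw [← map_polar hσ, smul_add] at hswap
    rw [coe_ιMul, leftExterior_ι_mul, leftExterior_ι_mul, mul_sub, h.r_mul_map_eq_zero hσ hβ,
      sub_zero, ← mul_assoc, h.r_mul_l, add_mul, mul_swap_of_mul_self_eq_zero h.r_mul_self b a]
    simp only [map_mul, exteriorHom_ι, ιInv_ι_mul, map_smul, LinearMap.smul_apply, mul_assoc,
      neg_mul]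
    rw [← sub_eq_zero] at hswap ⊢
    rw [← hswap]
    abel
  | add x y hx hy =>
    simp only [Submodule.coe_add, map_add, mul_add, hx, hy, LinearMap.add_apply]
    abel

/-- The homomorphism from the model to `A` sending `(1, 0, 0)` to `1`. -/
def ofModel : EnvelopingModel R M S →ₗ[R] A :=
  h.exteriorHom.toLinearMap.coprod (((h.leftExterior hσ).domRestrict _).coprod σ)

theorem ofModel_apply (w : EnvelopingModel R M S) :
    h.ofModel hσ w = h.exteriorHom w.1 + (h.leftExterior hσ w.2.1 + σ w.2.2) :=
  rfl

theorem ofModel_left (hβ : Submodule.span R (Set.range fun m => β m m) = ⊤)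
    (a : M) (w : EnvelopingModel R M S) :
    h.ofModel hσ (left β a w) = l a * h.ofModel hσ w := by
  simp only [ofModel_apply, left_apply, coe_ιMul, map_mul, exteriorHom_ι, leftExterior_ι_mul,
    mul_add, h.l_mul_leftExterior hσ hβ, h.l_mul_map_eq_zero hσ hβ]
  abel

theorem ofModel_right (hβ : Submodule.span R (Set.range fun m => β m m) = ⊤)
    (a : M) (w : EnvelopingModel R M S) :
    h.ofModel hσ (right β a w) = r a * h.ofModel hσ w := by
  simp only [ofModel_apply, right_apply, Submodule.coe_neg, coe_ιMul, map_sub, map_neg, map_mul,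
    exteriorHom_ι, mul_add, h.r_mul_leftExterior hσ hβ, h.r_mul_map_eq_zero hσ hβ]
  abel

end Hom

section Regular

variable {ρ : A →ₐ[R] End R (EnvelopingModel R M S)}

theorem ofModel_map_apply (h : IsBirepresentation l r) (hσ : ∀ m, σ (β m m) = l m * r m)
    (hβ : Submodule.span R (Set.range fun m => β m m) = ⊤)
    (hgen : Algebra.adjoin R (Set.range l ∪ Set.range r) = ⊤)
    (hl : ∀ a, ρ (l a) = left β a) (hr : ∀ a, ρ (r a) = right β a)
    (u : A) (w : EnvelopingModel R M S) :
    h.ofModel hσ (ρ u w) = u * h.ofModel hσ w := by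
  have hu : u ∈ Algebra.adjoin R (Set.range l ∪ Set.range r) := hgen ▸ Algebra.mem_top
  induction hu using Algebra.adjoin_induction generalizing w with
  | mem u hu =>
    obtain ⟨a, rfl⟩ | ⟨a, rfl⟩ := hu
    · rw [hl, h.ofModel_left hσ hβ]
    · rw [hr, h.ofModel_right hσ hβ]
  | algebraMap c => rw [AlgHom.commutes, Module.algebraMap_end_apply, map_smul, Algebra.smul_def]
  | add u v _ _ hu hv => rw [map_add, LinearMap.add_apply, map_add, hu, hv, add_mul]
  | mul u v _ _ hu hv => rw [map_mul, End.mul_apply, hu, hv, mul_assoc]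

theorem ofModel_toModel (h : IsBirepresentation l r) (hσ : ∀ m, σ (β m m) = l m * r m)
    (hβ : Submodule.span R (Set.range fun m => β m m) = ⊤)
    (hgen : Algebra.adjoin R (Set.range l ∪ Set.range r) = ⊤)
    (hl : ∀ a, ρ (l a) = left β a) (hr : ∀ a, ρ (r a) = right β a) (u : A) :
    h.ofModel hσ (toModel ρ u) = u := by
  have ofModel_one : h.ofModel hσ (1, 0, 0) = 1 := by simp [ofModel_apply]
  rw [toModel_apply, h.ofModel_map_apply hσ hβ hgen hl hr, ofModel_one, mul_one]

theorem toModel_exteriorHom (h : IsBirepresentation l r) (hr : ∀ a, ρ (r a) = right β a)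
    (x : ExteriorAlgebra R M) : toModel ρ (h.exteriorHom x) = (x, 0, 0) := by
  induction x using CliffordAlgebra.left_induction with
  | algebraMap c =>
    rw [AlgHom.commutes, toModel_apply, AlgHom.commutes, Module.algebraMap_end_apply]
    simp [Algebra.algebraMap_eq_smul_one]
  | add x y hx hy => rw [map_add, map_add, hx, hy]; simp
  | ι_mul x m hx =>
    rw [map_mul, exteriorHom_ι, toModel_mul, hx, hr, right_apply]
    simp

theorem toModel_l_mul_exteriorHom (h : IsBirepresentation l r) (hl : ∀ a, ρ (l a) = left β a)
    (hr : ∀ a, ρ (r a) = right β a) (a : M) (x : ExteriorAlgebra R M) :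
    toModel ρ (l a * h.exteriorHom x) = (0, ιMul a x, β a (ιInv x)) := by
  rw [toModel_mul, h.toModel_exteriorHom hr, hl, left_apply]
  simp

theorem toModel_map (h : IsBirepresentation l r) (hσ : ∀ m, σ (β m m) = l m * r m)
    (hβ : Submodule.span R (Set.range fun m => β m m) = ⊤)
    (hl : ∀ a, ρ (l a) = left β a) (hr : ∀ a, ρ (r a) = right β a) (s : S) :
    toModel ρ (σ s) = (0, 0, s) := by
  suffices (toModel ρ).comp σ = (LinearMap.inr R _ _).comp (LinearMap.inr R _ _) from
    LinearMap.congr_fun this s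
  refine LinearMap.ext_on_range hβ fun m => ?_
  have ιMul_ι_self : ιMul m (ι R m) = 0 := Subtype.ext (ι_sq_zero m)
  rw [LinearMap.comp_apply, hσ, ← h.exteriorHom_ι m, h.toModel_l_mul_exteriorHom hl hr,
    ιMul_ι_self, ι_leftInverse m]
  rfl

theorem toModel_leftExterior (h : IsBirepresentation l r) (hσ : ∀ m, σ (β m m) = l m * r m)
    (hβ : Submodule.span R (Set.range fun m => β m m) = ⊤)
    (hl : ∀ a, ρ (l a) = left β a) (hr : ∀ a, ρ (r a) = right β a) (q : PosExterior R M) :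
    toModel ρ (h.leftExterior hσ q) = (0, q, 0) := by
  induction q using PosExterior.induction with
  | ι_mul a x =>
    rw [coe_ιMul, leftExterior_ι_mul, map_sub, h.toModel_l_mul_exteriorHom hl hr,
      h.toModel_map hσ hβ hl hr]
    simp
  | add x y hx hy => rw [Submodule.coe_add, map_add, map_add, hx, hy]; simp

theorem toModel_ofModel (h : IsBirepresentation l r) (hσ : ∀ m, σ (β m m) = l m * r m)
    (hβ : Submodule.span R (Set.range fun m => β m m) = ⊤)
    (hl : ∀ a, ρ (l a) = left β a) (hr : ∀ a, ρ (r a) = right β a) (w : EnvelopingModel R M S) :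
    toModel ρ (h.ofModel hσ w) = w := by
  rw [ofModel_apply, map_add, map_add, h.toModel_exteriorHom hr,
    h.toModel_leftExterior hσ hβ hl hr, h.toModel_map hσ hβ hl hr]
  ext <;> simp

/-- An algebra generated by a birepresentation and acting on the model through it is isomorphic
to the model, by the orbit map of `(1, 0, 0)`. -/
def equivModel (h : IsBirepresentation l r) (hσ : ∀ m, σ (β m m) = l m * r m)
    (hβ : Submodule.span R (Set.range fun m => β m m) = ⊤)
    (hgen : Algebra.adjoin R (Set.range l ∪ Set.range r) = ⊤)
    (hl : ∀ a, ρ (l a) = left β a) (hr : ∀ a, ρ (r a) = right β a) :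
    A ≃ₗ[R] EnvelopingModel R M S :=
  LinearEquiv.ofLinearMap (toModel ρ) (h.ofModel hσ)
    (LinearMap.ext (h.toModel_ofModel hσ hβ hl hr))
    (LinearMap.ext (h.ofModel_toModel hσ hβ hgen hl hr))

end Regular

end IsBirepresentation

end FromModel

end Birepresentation

section SymmetricSquare

variable {R ι : Type*} [CommRing R] [LinearOrder ι]

variable (R ι) in
/-- The bilinear map `(a, b) ↦ ∑_{i ≥ j} a i * b j • s(i, j)`. Its restriction to the diagonal is
the universal quadratic map on `R^ι`, with values in the symmetric square. -/
def orderedMul : (ι → R) →ₗ[R] (ι → R) →ₗ[R] Sym2 ι → R :=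
  LinearMap.mk₂ R (fun a b z => a z.sup * b z.inf)
    (fun _ _ _ => funext fun _ => add_mul _ _ _) (fun _ _ _ => funext fun _ => mul_assoc _ _ _)
    (fun _ _ _ => funext fun _ => mul_add _ _ _)
    (fun _ _ _ => funext fun _ => mul_left_comm _ _ _)

theorem orderedMul_self_mk (m : ι → R) (i j : ι) : orderedMul R ι m m s(i, j) = m i * m j := by
  change m s(i, j).sup * m s(i, j).inf = m i * m j
  rw [Sym2.sup_mk, Sym2.inf_mk]
  obtain hij | hji := le_total i j
  · rw [sup_eq_right.2 hij, inf_eq_left.2 hij, mul_comm]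
  · rw [sup_eq_left.2 hji, inf_eq_right.2 hji]

theorem orderedMul_single_self (i : ι) :
    orderedMul R ι (Pi.single i 1) (Pi.single i 1) = Pi.single s(i, i) 1 := by
  ext z
  induction z using Sym2.ind with
  | h j k =>
    rw [orderedMul_self_mk]
    simp only [Pi.single_apply, Sym2.eq_iff]
    grind

theorem orderedMul_single_add_single_self {i j : ι} (hij : i ≠ j) :
    orderedMul R ι (Pi.single i 1 + Pi.single j 1) (Pi.single i 1 + Pi.single j 1) =
      Pi.single s(i, i) 1 + Pi.single s(j, j) 1 + Pi.single s(i, j) 1 := by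
  ext z
  induction z using Sym2.ind with
  | h k m =>
    rw [orderedMul_self_mk]
    simp only [Pi.add_apply, Pi.single_apply, Sym2.eq_iff]
    grind

theorem span_range_orderedMul_self [Finite ι] :
    Submodule.span R (Set.range fun m => orderedMul R ι m m) = ⊤ := by
  set D := Submodule.span R (Set.range fun m => orderedMul R ι m m)
  have diag_mem (m : ι → R) : orderedMul R ι m m ∈ D := Submodule.subset_span ⟨m, rfl⟩
  have single_diag_mem (i : ι) : Pi.single s(i, i) 1 ∈ D :=
    orderedMul_single_self (R := R) i ▸ diag_mem _
  have single_mem (z : Sym2 ι) : Pi.single z 1 ∈ D := by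
    induction z using Sym2.ind with
    | h i j =>
      obtain rfl | hij := eq_or_ne i j
      · exact single_diag_mem i
      · have := diag_mem (Pi.single i 1 + Pi.single j 1)
        rw [orderedMul_single_add_single_self hij] at this
        exact (D.add_mem_iff_right (D.add_mem (single_diag_mem i) (single_diag_mem j))).1 this
  rw [eq_top_iff, ← (Pi.basisFun R (Sym2 ι)).span_eq, Submodule.span_le, Set.range_subset_iff]
  simpa only [Pi.basisFun_apply, SetLike.mem_coe] using single_mem

variable [Fintype ι] {N : Type*} [AddCommGroup N] [Module R N]

/-- The linear map out of the symmetric square that represents the quadratic map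
`m ↦ B (m, m)`. -/
def sym2Lift (B : (ι → R) →ₗ[R] (ι → R) →ₗ[R] N) : (Sym2 ι → R) →ₗ[R] N :=
  ∑ i, ∑ j, (LinearMap.proj s(i, j)).smulRight (B (Pi.single i 1) (Pi.single j 1))

theorem sym2Lift_orderedMul_self (B : (ι → R) →ₗ[R] (ι → R) →ₗ[R] N) (m : ι → R) :
    sym2Lift B (orderedMul R ι m m) = B m m := by
  calc sym2Lift B (orderedMul R ι m m)
      = ∑ i, ∑ j, (m j * m i) • B (Pi.single i 1) (Pi.single j 1) := by
        simp [sym2Lift, orderedMul_self_mk, mul_comm]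
    _ = B (∑ i, m i • Pi.single i 1) (∑ j, m j • Pi.single j 1) := by
        rw [LinearMap.map_sum₂]
        simp only [map_sum, map_smul, LinearMap.smul_apply, mul_smul]
    _ = B m m := by rw [← pi_eq_sum_univ' m]

end SymmetricSquare

section Rank

variable {R M ι : Type*} [CommRing R] [AddCommGroup M] [Module R M]

theorem ker_coord_eq_comap_supported (b : Basis ι R M) (i : ι) :
    LinearMap.ker (b.coord i) =
      (Finsupp.supported R R {i}ᶜ).comap (b.repr : M →ₗ[R] ι →₀ R) := by
  ext x
  simp [Finsupp.mem_supported']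

/-- The basis of the kernel of a coordinate function formed by the other basis vectors. -/
def kerCoordBasis (b : Basis ι R M) (i : ι) :
    Basis ({i}ᶜ : Set ι) R (LinearMap.ker (b.coord i)) :=
  Basis.ofRepr <|
    (LinearEquiv.ofEq _ _ (ker_coord_eq_comap_supported b i)).trans <|
      (b.repr.ofSubmodule' (Finsupp.supported R R {i}ᶜ)).trans (Finsupp.supportedEquivFinsupp _)

variable [LinearOrder ι]

theorem algebraMapInv_eq_coord_empty (b : Basis ι R M) :
    (algebraMapInv (R := R) (M := M)).toLinearMap = b.ExteriorAlgebra.coord ∅ := by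
  refine b.ExteriorAlgebra.ext fun s => ?_
  rw [Basis.coord_apply, Basis.repr_self, AlgHom.toLinearMap_apply]
  cases hs : s.card with
  | zero =>
    obtain rfl := Finset.card_eq_zero.1 hs
    rw [basis_apply_ofCard b hs, Finsupp.single_eq_same]
    simp [ιMulti_family]
  | succ k =>
    have hne : s ≠ ∅ := by rintro rfl; simp at hs
    rw [basis_apply_ofCard b hs, Finsupp.single_eq_of_ne hne.symm, ιMulti_family,
      ιMulti_succ_apply, algebraMapInv_ι_mul]

/-- The basis of `Λ⁺` formed by the products of nonempty sets of basis vectors. -/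
def PosExterior.basis (b : Basis ι R M) :
    Basis ({∅}ᶜ : Set (Finset ι)) R (PosExterior R M) :=
  (kerCoordBasis b.ExteriorAlgebra ∅).map
    (LinearEquiv.ofEq _ _ (congrArg LinearMap.ker (algebraMapInv_eq_coord_empty b).symm))

variable [Fintype ι] [Nontrivial R]

theorem finrank_exteriorAlgebra (b : Basis ι R M) :
    finrank R (ExteriorAlgebra R M) = 2 ^ Fintype.card ι := by
  rw [finrank_eq_card_basis b.ExteriorAlgebra, Fintype.card_finset]

theorem finrank_posExterior (b : Basis ι R M) :
    finrank R (PosExterior R M) = 2 ^ Fintype.card ι - 1 := by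
  rw [finrank_eq_card_basis (PosExterior.basis b), Fintype.card_compl_set, Fintype.card_finset,
    Set.card_singleton]

end Rank

namespace Ualg

variable {K : Type} [CommRing K] {n : ℕ}

variable (K n) in
/-- The quotient map `Tens_K(K^n ⊕ K^n) → U(K^n)`. -/
def mk : TensorAlgebra K ((Fin n → K) × (Fin n → K)) →ₐ[K] Ualg K n :=
  RingQuot.mkAlgHom K (URel K n)

theorem mk_eq_zero {x : TensorAlgebra K ((Fin n → K) × (Fin n → K))} (h : URel K n x 0) :
    mk K n x = 0 :=
  (RingQuot.mkAlgHom_rel K h).trans (map_zero (mk K n))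

variable (K n) in
/-- `lU` as a linear map. -/
def l : (Fin n → K) →ₗ[K] Ualg K n :=
  (mk K n).toLinearMap ∘ₗ TensorAlgebra.ι K ∘ₗ LinearMap.inl K _ _

variable (K n) in
/-- `rU` as a linear map. -/
def r : (Fin n → K) →ₗ[K] Ualg K n :=
  (mk K n).toLinearMap ∘ₗ TensorAlgebra.ι K ∘ₗ LinearMap.inr K _ _

theorem mk_lT (a : Fin n → K) : mk K n (lT K n a) = l K n a :=
  rfl

theorem mk_rT (a : Fin n → K) : mk K n (rT K n a) = r K n a :=
  rfl

variable (K n) in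
theorem isBirepresentation : IsBirepresentation (l K n) (r K n) where
  l_mul_self a := by simpa only [map_mul, mk_lT, mk_rT] using mk_eq_zero (URel.ll a)
  r_mul_self a := by simpa only [map_mul, mk_lT, mk_rT] using mk_eq_zero (URel.rr a)
  l_mul_l_add a b := by simpa only [map_add, map_mul, mk_lT, mk_rT] using mk_eq_zero (URel.llrr a b)
  r_mul_l_sub a b := by simpa only [map_sub, map_mul, mk_lT, mk_rT] using mk_eq_zero (URel.rl a b)

variable (K n) in
theorem adjoin_range_l_union_range_r :
    Algebra.adjoin K (Set.range (l K n) ∪ Set.range (r K n)) = ⊤ := by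
  refine eq_top_iff.2 fun u _ => ?_
  obtain ⟨x, rfl⟩ : ∃ x, mk K n x = u := RingQuot.mkAlgHom_surjective K (URel K n) u
  induction x using TensorAlgebra.induction with
  | algebraMap c => exact (AlgHom.commutes (mk K n) c) ▸ Subalgebra.algebraMap_mem _ c
  | ι v =>
    have mk_ι : mk K n (TensorAlgebra.ι K v) = l K n v.1 + r K n v.2 := by
      rw [← mk_lT, ← mk_rT, ← map_add, lT, rT, ← map_add, Prod.fst_add_snd]
    rw [mk_ι]
    exact add_mem (Algebra.subset_adjoin (.inl ⟨_, rfl⟩)) (Algebra.subset_adjoin (.inr ⟨_, rfl⟩))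
  | mul x y hx hy => exact map_mul (mk K n) x y ▸ mul_mem (hx trivial) (hy trivial)
  | add x y hx hy => exact map_add (mk K n) x y ▸ add_mem (hx trivial) (hy trivial)

section Lift

variable {A : Type*} [Ring A] [Algebra K A] {l' r' : (Fin n → K) →ₗ[K] A}

/-- The universal property of `U(K^n)`. -/
def lift (h : IsBirepresentation l' r') : Ualg K n →ₐ[K] A :=
  RingQuot.liftAlgHom K ⟨TensorAlgebra.lift K (l'.coprod r'), fun _ _ hrel => by
    cases hrel with
    | ll a => simpa [lT] using h.l_mul_self a
    | rr a => simpa [rT] using h.r_mul_self a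
    | llrr a b => simpa [lT, rT] using h.l_mul_l_add a b
    | rl a b => simpa [lT, rT] using h.r_mul_l_sub a b⟩

theorem lift_mk (h : IsBirepresentation l' r')
    (x : TensorAlgebra K ((Fin n → K) × (Fin n → K))) :
    lift h (mk K n x) = TensorAlgebra.lift K (l'.coprod r') x :=
  RingQuot.liftAlgHom_mkAlgHom_apply ..

theorem lift_l (h : IsBirepresentation l' r') (a : Fin n → K) : lift h (l K n a) = l' a := by
  rw [← mk_lT, lift_mk]
  simp [lT]

theorem lift_r (h : IsBirepresentation l' r') (a : Fin n → K) : lift h (r K n a) = r' a := by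
  rw [← mk_rT, lift_mk]
  simp [rT]

end Lift

variable (K n) in
/-- The linear isomorphism `u ↦ u • (1, 0, 0)` of `U(K^n)` with `Λ × Λ⁺ × S²`. -/
def equivModel : Ualg K n ≃ₗ[K] EnvelopingModel K (Fin n → K) (Sym2 (Fin n) → K) :=
  (isBirepresentation K n).equivModel
    (sym2Lift_orderedMul_self ((LinearMap.mul K (Ualg K n)).compl₁₂ (l K n) (r K n)))
    span_range_orderedMul_self (adjoin_range_l_union_range_r K n)
    (lift_l (EnvelopingModel.isBirepresentation _))
    (lift_r (EnvelopingModel.isBirepresentation _))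

end Ualg

theorem two_mul_choose_succ_two (n : ℕ) : 2 * (n + 1).choose 2 = n ^ 2 + n := by
  rw [Nat.choose_two_right, Nat.mul_div_cancel' (Nat.even_mul_pred_self _).two_dvd]
  simp only [Nat.add_sub_cancel]
  ring

theorem dim_Ualg_general (K : Type) [CommRing K] [Nontrivial K] (n : ℕ) :
    Module.Free K (Ualg K n) ∧ Module.Finite K (Ualg K n) ∧
      (finrank K (Ualg K n) : ℤ) = 2 * 2 ^ n + ((n : ℤ) ^ 2 + n - 2) / 2 := by
  let b := Pi.basisFun K (Fin n)
  have : Module.Free K (ExteriorAlgebra K (Fin n → K)) := .of_basis b.ExteriorAlgebra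
  have : Module.Finite K (ExteriorAlgebra K (Fin n → K)) := .of_basis b.ExteriorAlgebra
  have : Module.Free K (PosExterior K (Fin n → K)) := .of_basis (PosExterior.basis b)
  have : Module.Finite K (PosExterior K (Fin n → K)) := .of_basis (PosExterior.basis b)
  let e := Ualg.equivModel K n
  refine ⟨.of_equiv e.symm, .equiv e.symm, ?_⟩
  have finrank_eq : finrank K (Ualg K n) = 2 ^ n + (2 ^ n - 1 + (n + 1).choose 2) := by
    rw [e.finrank_eq, finrank_prod, finrank_prod, finrank_exteriorAlgebra b,
      finrank_posExterior b, finrank_fintype_fun_eq_card, Sym2.card, Fintype.card_fin]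
  have two_mul_choose : 2 * ((n + 1).choose 2 : ℤ) = n ^ 2 + n :=
    mod_cast two_mul_choose_succ_two n
  rw [finrank_eq]
  push_cast [Nat.one_le_two_pow]
  omega

/-- For `K` a field, `U(K^n)` is finite dimensional of dimension `2·2^n + (n²+n−2)/2`. -/
theorem dim_Ualg (K : Type) [Field K] (n : ℕ) :
    FiniteDimensional K (Ualg K n) ∧
      (Module.finrank K (Ualg K n) : ℤ) = 2 * 2 ^ n + ((n : ℤ) ^ 2 + n - 2) / 2 :=
  (dim_Ualg_general K n).2

end
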